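/- Let B ⊆ {2,…,K} be nonempty, J ⊆ (0,∞) an open interval, and N_a : J → (0,∞) for a ∈ [K] differentiable functions such that for all N ∈ J: Σ_{a∈[K]} N_a(N) = N; N_1 is constant on J, and N_a is constant on J for every a ∈ B̄^c; and W_a(N_1, N_a(N)) takes a common value I_B(N) for all a ∈ B. Then for all N ∈ J: I_B'(N) = (Σ_{a∈B} d_{a,a}^{-1})^{-1} and, for every a ∈ B, N_a'(N) = d_{a,a}^{-1}·(Σ_{a∈B} d_{a,a}^{-1})^{-1}. In particular I_B(N) and each N_a(N), a ∈ B, are strictly increasing functions of N on J. -/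

import Mathlib

open scoped BigOperators

/-- A single-parameter exponential family, given by the log-partition function `b`,
smooth with positive second derivative on an open interval `Θ`, together with the
inverse `θof` of `b'` on the set of means `S = b'(Θ)`. -/
structure SPEF where
  Θ : Set ℝ
  Θ_isOpen : IsOpen Θ
  Θ_ordConnected : Set.OrdConnected Θ
  Θ_nonempty : Θ.Nonempty
  b : ℝ → ℝ
  b_smooth : ContDiffOn ℝ (⊤ : ℕ∞) b Θ
  b_conv : ∀ t ∈ Θ, 0 < iteratedDeriv 2 b t
  θof : ℝ → ℝ
  θof_mem : ∀ μ ∈ deriv b '' Θ, θof μ ∈ Θ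
  θof_spec : ∀ μ ∈ deriv b '' Θ, deriv b (θof μ) = μ

namespace SPEF

/-- The set of means of the family. -/
def S (F : SPEF) : Set ℝ := deriv F.b '' F.Θ

/-- KL divergence `d(μ, x)` between the members of the family with means `μ` and `x`. -/
noncomputable def d (F : SPEF) (μ x : ℝ) : ℝ :=
  (F.θof μ - F.θof x) * μ - F.b (F.θof μ) + F.b (F.θof x)

end SPEF

/-- A `K`-armed bandit instance with arm distributions in a fixed SPEF; arm `0`
(the paper's arm `1`) is the unique best arm. -/
structure Bandit (K : ℕ) [NeZero K] extends SPEF where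
  two_le : 2 ≤ K
  μ : Fin K → ℝ
  μ_mem : ∀ a, μ a ∈ SPEF.S toSPEF
  μ_best : ∀ a : Fin K, a ≠ 0 → μ a < μ 0

namespace Bandit

variable {K : ℕ} [NeZero K]

/-- KL divergence of the underlying family. -/
noncomputable def d (M : Bandit K) : ℝ → ℝ → ℝ := M.toSPEF.d

/-- The weighted mean `x_{1,a}(N₁, N_a)`. -/
noncomputable def x1 (M : Bandit K) (a : Fin K) (N1 Na : ℝ) : ℝ :=
  (N1 * M.μ 0 + Na * M.μ a) / (N1 + Na)

/-- The index `W_a(N₁, N_a)` of an arm `a ≠ 1`. -/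
noncomputable def W (M : Bandit K) (a : Fin K) (N1 Na : ℝ) : ℝ :=
  N1 * M.d (M.μ 0) (M.x1 a N1 Na) + Na * M.d (M.μ a) (M.x1 a N1 Na)

/-- The set `{2, …, K}` of suboptimal arms. -/
def alt (K : ℕ) [NeZero K] : Finset (Fin K) := Finset.univ.filter (fun a => a ≠ 0)

/-- The anchor function `g(μ, N)`. -/
noncomputable def g (M : Bandit K) (Nv : Fin K → ℝ) : ℝ :=
  (∑ a ∈ alt K, M.d (M.μ 0) (M.x1 a (Nv 0) (Nv a)) / M.d (M.μ a) (M.x1 a (Nv 0) (Nv a))) - 1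

end Bandit

open Bandit

/-!
The weighted mean `x_{1,a}` minimizes `x ↦ N₁ d(μ₁, x) + N_a d(μ_a, x)`, so by the envelope
principle `∂W_a/∂N_a = d(μ_a, x_{1,a}) = d_{a,a}`. While `N₁` is constant, differentiating the
common index along the flow gives `I_B' = d_{a,a} N_a'` for every `a ∈ B`. The allocations off `B`
are constant, so the rates `N_a'`, `a ∈ B`, add up to `1`, and solving for `I_B'` gives the claim.
-/

open scoped Topology

lemma lt_of_strictConvexOn_of_hasDerivAt {s : Set ℝ} {f : ℝ → ℝ} {f' x y : ℝ}
    (hf : StrictConvexOn ℝ s f) (hx : x ∈ s) (hy : y ∈ s) (hxy : x ≠ y) (hf' : HasDerivAt f f' x) :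
    f x + f' * (y - x) < f y := by
  rcases hxy.lt_or_gt with hlt | hgt
  · have hslope := hf.lt_slope_of_hasDerivAt hx hy hlt hf'
    rw [slope_def_field, lt_div_iff₀ (sub_pos.2 hlt)] at hslope
    linarith
  · have hslope := hf.slope_lt_of_hasDerivAt hy hx hgt hf'
    rw [slope_def_field, div_lt_iff₀ (sub_pos.2 hgt)] at hslope
    linarith

lemma strictMonoOn_of_hasDerivAt_pos {s : Set ℝ} {f f' : ℝ → ℝ} (hs : Convex ℝ s)
    (hf : ∀ x ∈ s, HasDerivAt f (f' x) x) (hf' : ∀ x ∈ s, 0 < f' x) : StrictMonoOn f s :=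
  strictMonoOn_of_hasDerivWithinAt_pos hs (HasDerivAt.continuousOn hf)
    (fun x hx => (hf x (interior_subset hx)).hasDerivWithinAt)
    fun x hx => hf' x (interior_subset hx)

lemma sum_deriv_eq_one_of_sum_eq_id {𝕜 ι : Type*} [NontriviallyNormedField 𝕜] [Fintype ι]
    {n : 𝕜 → ι → 𝕜} {n' : ι → 𝕜} {s : Finset ι} {x : 𝕜}
    (hn : ∀ i, HasDerivAt (fun t => n t i) (n' i) x) (hsum : ∀ᶠ t in 𝓝 x, ∑ i, n t i = t)
    (hconst : ∀ i ∉ s, ∀ᶠ t in 𝓝 x, n t i = n x i) :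
    ∑ i ∈ s, n' i = 1 := by
  have hzero : ∀ i ∉ s, n' i = 0 := fun i hi =>
    (hn i).unique ((hasDerivAt_const x (n x i)).congr_of_eventuallyEq (hconst i hi))
  calc ∑ i ∈ s, n' i = ∑ i, n' i :=
        Finset.sum_subset (Finset.subset_univ s) fun i _ hi => hzero i hi
    _ = 1 := (HasDerivAt.fun_sum fun i _ => hn i).unique
        ((hasDerivAt_id x).congr_of_eventuallyEq hsum)

lemma eq_inv_sum_inv_of_mul_eq_of_sum_eq_one {R ι : Type*} [DivisionRing R] {s : Finset ι}
    {c r : ι → R} {v : R} (hc : ∀ i ∈ s, c i ≠ 0) (hv : ∀ i ∈ s, c i * r i = v)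
    (hr : ∑ i ∈ s, r i = 1) : v = (∑ i ∈ s, (c i)⁻¹)⁻¹ := by
  refine eq_inv_of_mul_eq_one_right ?_
  calc (∑ i ∈ s, (c i)⁻¹) * v = ∑ i ∈ s, (c i)⁻¹ * v := Finset.sum_mul ..
    _ = ∑ i ∈ s, r i := Finset.sum_congr rfl fun i hi => by
        rw [← hv i hi, inv_mul_cancel_left₀ (hc i hi)]
    _ = 1 := hr

namespace SPEF

variable (F : SPEF) {t μ x : ℝ}

lemma convex_Θ : Convex ℝ F.Θ := F.Θ_ordConnected.convex

lemma hasDerivAt_b (ht : t ∈ F.Θ) : HasDerivAt F.b (deriv F.b t) t :=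
  ((F.b_smooth.contDiffAt (F.Θ_isOpen.mem_nhds ht)).differentiableAt (by simp)).hasDerivAt

lemma hasStrictDerivAt_deriv_b (ht : t ∈ F.Θ) :
    HasStrictDerivAt (deriv F.b) (iteratedDeriv 2 F.b t) t := by
  have hsmooth : ContDiffOn ℝ 1 (deriv F.b) F.Θ :=
    F.b_smooth.deriv_of_isOpen F.Θ_isOpen (by norm_cast)
  rw [iteratedDeriv_succ, iteratedDeriv_one]
  exact (hsmooth.contDiffAt (F.Θ_isOpen.mem_nhds ht)).hasStrictDerivAt one_ne_zero

lemma strictMonoOn_deriv_b : StrictMonoOn (deriv F.b) F.Θ :=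
  strictMonoOn_of_hasDerivAt_pos F.convex_Θ
    (fun _ ht => (F.hasStrictDerivAt_deriv_b ht).hasDerivAt) F.b_conv

lemma strictConvexOn_b : StrictConvexOn ℝ F.Θ F.b :=
  (F.strictMonoOn_deriv_b.mono interior_subset).strictConvexOn_of_deriv F.convex_Θ
    (HasDerivAt.continuousOn fun _ ht => F.hasDerivAt_b ht)

lemma θof_deriv_b (ht : t ∈ F.Θ) : F.θof (deriv F.b t) = t :=
  F.strictMonoOn_deriv_b.injOn (F.θof_mem _ ⟨t, ht, rfl⟩) ht (F.θof_spec _ ⟨t, ht, rfl⟩)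

lemma injOn_θof : Set.InjOn F.θof F.S := fun x hx y hy hxy => by
  rw [← F.θof_spec x hx, hxy, F.θof_spec y hy]

lemma convex_S : Convex ℝ F.S :=
  (F.convex_Θ.isPreconnected.image _ (HasDerivAt.continuousOn fun _ ht =>
    (F.hasStrictDerivAt_deriv_b ht).hasDerivAt)).ordConnected.convex

lemma hasDerivAt_θof (hx : x ∈ F.S) :
    HasDerivAt F.θof (iteratedDeriv 2 F.b (F.θof x))⁻¹ x := by
  have hθ := F.θof_mem x hx
  have hinv : ∀ᶠ s in 𝓝 (F.θof x), F.θof (deriv F.b s) = s :=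
    (F.Θ_isOpen.eventually_mem hθ).mono fun _ hs => F.θof_deriv_b hs
  simpa only [F.θof_spec x hx] using
    ((F.hasStrictDerivAt_deriv_b hθ).to_local_left_inverse (F.b_conv _ hθ).ne' hinv).hasDerivAt

lemma hasDerivAt_d (μ : ℝ) (hx : x ∈ F.S) :
    HasDerivAt (F.d μ) ((iteratedDeriv 2 F.b (F.θof x))⁻¹ * (x - μ)) x := by
  have hθ := F.hasDerivAt_θof hx
  have hb : HasDerivAt (F.b ∘ F.θof) (x * (iteratedDeriv 2 F.b (F.θof x))⁻¹) x := by
    simpa only [F.θof_spec x hx] using (F.hasDerivAt_b (F.θof_mem x hx)).comp x hθ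
  exact ((((hθ.const_sub (F.θof μ)).mul_const μ).sub_const _).add hb).congr_deriv (by ring)

/-- `d μ x` is the gap at `θof x` between `b` and its tangent line at `θof μ`, of slope `μ`. -/
lemma d_pos (hμ : μ ∈ F.S) (hx : x ∈ F.S) (hne : μ ≠ x) : 0 < F.d μ x := by
  have htangent := lt_of_strictConvexOn_of_hasDerivAt F.strictConvexOn_b (F.θof_mem μ hμ)
    (F.θof_mem x hx) (F.injOn_θof.ne hμ hx hne) (F.hasDerivAt_b (F.θof_mem μ hμ))
  rw [F.θof_spec μ hμ] at htangent
  unfold d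
  linarith

end SPEF

namespace Bandit

variable {K : ℕ} [NeZero K] (M : Bandit K) {a : Fin K} {N1 Na : ℝ}

lemma balance_x1 (hN : N1 + Na ≠ 0) :
    N1 * (M.x1 a N1 Na - M.μ 0) + Na * (M.x1 a N1 Na - M.μ a) = 0 := by
  rw [x1]
  field_simp
  ring

lemma x1_mem_S (hN1 : 0 ≤ N1) (hNa : 0 ≤ Na) (hN : 0 < N1 + Na) :
    M.x1 a N1 Na ∈ M.toSPEF.S := by
  have hmem := M.convex_S (M.μ_mem 0) (M.μ_mem a) (div_nonneg hN1 hN.le)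
    (div_nonneg hNa hN.le) (by rw [← add_div, div_self hN.ne'])
  convert hmem using 1
  simp only [x1, smul_eq_mul]
  ring

lemma μ_ne_x1 (ha : a ≠ 0) (hN1 : N1 ≠ 0) (hN : N1 + Na ≠ 0) : M.μ a ≠ M.x1 a N1 Na := by
  intro heq
  have hbalance := M.balance_x1 (a := a) hN
  rw [← heq, sub_self, mul_zero, add_zero] at hbalance
  exact mul_ne_zero hN1 (sub_ne_zero.2 (M.μ_best a ha).ne) hbalance

lemma differentiableAt_x1 (hN : N1 + Na ≠ 0) : DifferentiableAt ℝ (M.x1 a N1) Na := by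
  unfold x1
  fun_prop (disch := exact hN)

/-- The divergence `d_{a,a} = d(μ_a, x_{1,a})`, as a function of the allocations `N₁` and `N_a`. -/
noncomputable def dArm (a : Fin K) (N1 Na : ℝ) : ℝ := M.d (M.μ a) (M.x1 a N1 Na)

lemma dArm_pos (ha : a ≠ 0) (hN1 : 0 < N1) (hNa : 0 ≤ Na) : 0 < M.dArm a N1 Na :=
  have hN : 0 < N1 + Na := by positivity
  M.d_pos (M.μ_mem a) (M.x1_mem_S hN1.le hNa hN) (M.μ_ne_x1 ha hN1.ne' hN.ne')

lemma hasDerivAt_W (hN1 : 0 ≤ N1) (hNa : 0 ≤ Na) (hN : 0 < N1 + Na) :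
    HasDerivAt (M.W a N1) (M.dArm a N1 Na) Na := by
  have hx := (M.differentiableAt_x1 (a := a) hN.ne').hasDerivAt
  have hxS := M.x1_mem_S (a := a) hN1 hNa hN
  have hd0 := (M.hasDerivAt_d (M.μ 0) hxS).comp Na hx
  have hda := (M.hasDerivAt_d (M.μ a) hxS).comp Na hx
  refine ((hd0.const_mul N1).add ((hasDerivAt_id Na).mul hda)).congr_deriv ?_
  -- the terms carrying the derivative of `x1` cancel, since `x1` balances the two arms
  simp only [id, Function.comp_apply, dArm, Bandit.d]
  linear_combination (iteratedDeriv 2 M.b (M.θof (M.x1 a N1 Na)))⁻¹ * deriv (M.x1 a N1) Na *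
    M.balance_x1 (a := a) hN.ne'

lemma hasDerivAt_of_W_eventuallyEq {n : ℝ → Fin K → ℝ} {n' : ℝ} {I : ℝ → ℝ} {N : ℝ}
    (hN1 : 0 ≤ n N 0) (hNa : 0 ≤ n N a) (hN : 0 < n N 0 + n N a)
    (hn : HasDerivAt (fun t => n t a) n' N) (hconst : ∀ᶠ t in 𝓝 N, n t 0 = n N 0)
    (hI : ∀ᶠ t in 𝓝 N, M.W a (n t 0) (n t a) = I t) :
    HasDerivAt I (M.dArm a (n N 0) (n N a) * n') N := by
  refine ((M.hasDerivAt_W hN1 hNa hN).comp N hn).congr_of_eventuallyEq ?_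
  filter_upwards [hconst, hI] with t ht hIt
  rw [← hIt, ht, Function.comp_apply]

theorem hasDerivAt_commonIndex {B : Finset (Fin K)} {n : ℝ → Fin K → ℝ} {n' : Fin K → ℝ}
    {I : ℝ → ℝ} {N : ℝ} (h0 : 0 ∉ B) (hN1 : 0 < n N 0) (hNa : ∀ a ∈ B, 0 ≤ n N a)
    (hn : ∀ a, HasDerivAt (fun t => n t a) (n' a) N) (hsum : ∀ᶠ t in 𝓝 N, ∑ a, n t a = t)
    (hconst : ∀ a ∉ B, ∀ᶠ t in 𝓝 N, n t a = n N a)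
    (hI : ∀ a ∈ B, ∀ᶠ t in 𝓝 N, M.W a (n t 0) (n t a) = I t) :
    HasDerivAt I (∑ a ∈ B, (M.dArm a (n N 0) (n N a))⁻¹)⁻¹ N ∧
      ∀ a ∈ B, n' a = (M.dArm a (n N 0) (n N a))⁻¹ *
        (∑ b ∈ B, (M.dArm b (n N 0) (n N b))⁻¹)⁻¹ := by
  have hd : ∀ a ∈ B, M.dArm a (n N 0) (n N a) ≠ 0 := fun a ha =>
    (M.dArm_pos (ne_of_mem_of_not_mem ha h0) hN1 (hNa a ha)).ne'
  have hderiv : ∀ a ∈ B, HasDerivAt I (M.dArm a (n N 0) (n N a) * n' a) N := fun a ha =>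
    M.hasDerivAt_of_W_eventuallyEq hN1.le (hNa a ha)
      (add_pos_of_pos_of_nonneg hN1 (hNa a ha)) (hn a) (hconst 0 h0) (hI a ha)
  have hrates : ∑ a ∈ B, n' a = 1 := sum_deriv_eq_one_of_sum_eq_id hn hsum hconst
  have hrate : deriv I N = (∑ a ∈ B, (M.dArm a (n N 0) (n N a))⁻¹)⁻¹ :=
    eq_inv_sum_inv_of_mul_eq_of_sum_eq_one hd (fun a ha => (hderiv a ha).deriv.symm) hrates
  obtain ⟨a₀, ha₀⟩ : B.Nonempty := Finset.nonempty_of_sum_ne_zero (hrates.trans_ne one_ne_zero)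
  rw [← hrate]
  refine ⟨(hderiv a₀ ha₀).differentiableAt.hasDerivAt, fun a ha => ?_⟩
  rw [(hderiv a ha).deriv, inv_mul_cancel_left₀ (hd a ha)]

end Bandit

/-- Proposition 4.4, fluid dynamics when `g < 0`: keeping `N₁` and the
allocations off `B` constant while the indexes in `B` stay equal, the common index and
each allocation in `B` evolve by the stated ODEs and are strictly increasing. -/
theorem statement_10 {K : ℕ} [NeZero K] (M : Bandit K)
    (B : Finset (Fin K)) (hBne : B.Nonempty) (hBsub : B ⊆ alt K)
    (J : Set ℝ) (hJopen : IsOpen J) (hJconn : Set.OrdConnected J) (hJpos : J ⊆ Set.Ioi 0)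
    (Nf Nf' : ℝ → Fin K → ℝ) (IB : ℝ → ℝ)
    (hpos : ∀ N ∈ J, ∀ a, 0 < Nf N a)
    (hderiv : ∀ N ∈ J, ∀ a, HasDerivAt (fun t => Nf t a) (Nf' N a) N)
    (hsum : ∀ N ∈ J, ∑ a, Nf N a = N)
    (hconst1 : ∀ N ∈ J, ∀ N' ∈ J, Nf N 0 = Nf N' 0)
    (hconst : ∀ a ∈ alt K \ B, ∀ N ∈ J, ∀ N' ∈ J, Nf N a = Nf N' a)
    (hIB : ∀ N ∈ J, ∀ a ∈ B, M.W a (Nf N 0) (Nf N a) = IB N) :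
    (∀ N ∈ J,
      HasDerivAt IB (∑ a ∈ B, (M.d (M.μ a) (M.x1 a (Nf N 0) (Nf N a)))⁻¹)⁻¹ N ∧
      ∀ a ∈ B, Nf' N a =
        (M.d (M.μ a) (M.x1 a (Nf N 0) (Nf N a)))⁻¹ *
          (∑ b ∈ B, (M.d (M.μ b) (M.x1 b (Nf N 0) (Nf N b)))⁻¹)⁻¹) ∧
    StrictMonoOn IB J ∧
    ∀ a ∈ B, StrictMonoOn (fun N => Nf N a) J := by
  have h0 : 0 ∉ B := fun h => by simpa [alt] using hBsub h
  have hconst_compl : ∀ a ∉ B, ∀ N ∈ J, ∀ N' ∈ J, Nf N a = Nf N' a := fun a ha => by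
    rcases eq_or_ne a 0 with rfl | hne
    · exact hconst1
    · exact hconst a (by simp [alt, hne, ha])
  have hdinv : ∀ N ∈ J, ∀ a ∈ B, 0 < (M.dArm a (Nf N 0) (Nf N a))⁻¹ := fun N hN a ha =>
    inv_pos.2 (M.dArm_pos (ne_of_mem_of_not_mem ha h0) (hpos N hN 0) (hpos N hN a).le)
  have hrate : ∀ N ∈ J, 0 < (∑ a ∈ B, (M.dArm a (Nf N 0) (Nf N a))⁻¹)⁻¹ := fun N hN =>
    inv_pos.2 (Finset.sum_pos (hdinv N hN) hBne)
  have hdyn := fun N hN =>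
    have hJ : ∀ᶠ t in 𝓝 N, t ∈ J := hJopen.eventually_mem hN
    M.hasDerivAt_commonIndex h0 (hpos N hN 0) (fun a _ => (hpos N hN a).le) (hderiv N hN)
      (hJ.mono hsum) (fun a ha => hJ.mono fun t ht => hconst_compl a ha t ht N hN)
      (fun a ha => hJ.mono fun t ht => hIB t ht a ha)
  refine ⟨hdyn, ?_, fun a ha => ?_⟩
  · exact strictMonoOn_of_hasDerivAt_pos hJconn.convex (fun N hN => (hdyn N hN).1) hrate
  · refine strictMonoOn_of_hasDerivAt_pos hJconn.convex (fun N hN => hderiv N hN a) fun N hN => ?_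
    rw [(hdyn N hN).2 a ha]
    exact mul_pos (hdinv N hN a ha) (hrate N hN)
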